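/- Let p > 0 and a, b ∈ ℝ, and let J(a,b;−x) = ∫₀^1 t^a (1−t)^b e^{−xt} exp(−p/(t(1−t))) dt. Then, as x → +∞, J(a,b;−x) ~ √π · p^{a/2 + 1/4} · x^{−a/2 − 3/4} · exp(−p − 2√(px)); equivalently, J(a,b;−x) ~ 2 e^{−p} (p/x)^{(a+1)/2} K_{a+1}(2√(px)), where K_μ(w) = ∫₀^∞ e^{−w cosh u} cosh(μ u) du. That is, the quotient of J(a,b;−x) by either displayed expression tends to 1 as x → +∞. -/

import Mathlib

open MeasureTheory Set Filter

/-- The modified Bessel function of the second kind, for `w > 0` and real order `μ`: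
`K_μ(w) = ∫₀^∞ e^{-w cosh u} cosh(μ u) du`. -/
noncomputable def besselK (μ w : ℝ) : ℝ :=
  ∫ u in Ioi (0 : ℝ), Real.exp (-w * Real.cosh u) * Real.cosh (μ * u)

/-!
The substitution `t = √(p/x) eᵘ` turns `x t + p / t` into `w cosh u` with `w = 2√(px)`, and so turns
`J(a,b;-x)` into `(p/x)^((a+1)/2)` times the integral over `ℝ` of `e^{-w cosh u}` against
`e^{(a+1)u} g(√(p/x) eᵘ)`, where `g t = (1-t)^b e^{-p/(1-t)}` for `t < 1` is bounded and tends to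
`e^{-p}` at `0`. As `w → ∞` the mass concentrates at `u = 0` on the scale `1/√w`: rescaling
`u = v/√w`, dominated convergence replaces `e^{-w (cosh u - 1)}` by a Gaussian and the remaining
factor by its limit. The same argument with the factor `cosh (μ u)` gives the asymptotics of `K_μ`,
so both forms of the theorem follow by comparison.
-/

open Real Asymptotics Topology

section LaplaceMethod

lemma one_add_half_sq_le_cosh (u : ℝ) : 1 + u ^ 2 / 2 ≤ cosh u := by
  have h := sum_le_hasSum (Finset.range 2)
    (fun n _ => div_nonneg ((even_two_mul n).pow_nonneg u) (by positivity)) (hasSum_cosh u)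
  simpa [Finset.sum_range_succ] using h

lemma cosh_le_exp_abs (u : ℝ) : cosh u ≤ exp |u| := by
  rw [← cosh_abs, ← cosh_add_sinh]
  exact le_add_of_nonneg_right (sinh_nonneg_iff.2 (abs_nonneg u))

lemma half_sq_le_mul_cosh_div_sqrt_sub_one {w : ℝ} (hw : 0 < w) (v : ℝ) :
    v ^ 2 / 2 ≤ w * (cosh (v / √w) - 1) :=
  calc v ^ 2 / 2 = w * ((v / √w) ^ 2 / 2) := by rw [div_pow, sq_sqrt hw.le]; field_simp
    _ ≤ w * (cosh (v / √w) - 1) := by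
      gcongr
      linarith [one_add_half_sq_le_cosh (v / √w)]

variable {ι : Type*} {l : Filter ι} {w : ι → ℝ}

lemma tendsto_div_sqrt_nhds_zero (hw : Tendsto w l atTop) (v : ℝ) :
    Tendsto (fun i => v / √(w i)) l (𝓝 0) :=
  (tendsto_sqrt_atTop.comp hw).const_div_atTop v

lemma tendsto_mul_cosh_div_sqrt_sub_one (hw : Tendsto w l atTop) (v : ℝ) :
    Tendsto (fun i => w i * (cosh (v / √(w i)) - 1)) l (𝓝 (v ^ 2 / 2)) := by
  have hexp : Tendsto (fun i => w i * (exp ((w i)⁻¹ * (v ^ 2 / 2)) - 1)) l (𝓝 (v ^ 2 / 2)) := by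
    simpa using (hasDerivAt_exp 0).hasFDerivAt.lim (v ^ 2 / 2)
      (tendsto_norm_atTop_atTop.comp hw)
  refine tendsto_of_tendsto_of_tendsto_of_le_of_le' tendsto_const_nhds hexp ?_ ?_
  · filter_upwards [hw.eventually_gt_atTop 0] with i hi
    exact half_sq_le_mul_cosh_div_sqrt_sub_one hi v
  · filter_upwards [hw.eventually_gt_atTop 0] with i hi
    have hsq : (v / √(w i)) ^ 2 / 2 = (w i)⁻¹ * (v ^ 2 / 2) := by
      rw [div_pow, sq_sqrt hi.le]; field_simp
    gcongr
    exact hsq ▸ cosh_le_exp_half_sq (v / √(w i))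

lemma exp_neg_mul_cosh_div_sqrt_sub_one_mul_exp_le {w : ℝ} (hw : 1 ≤ w) (m v : ℝ) :
    exp (-(w * (cosh (v / √w) - 1))) * exp (m * |v / √w|)
      ≤ exp (m ^ 2) * exp (-(1 / 4) * v ^ 2) := by
  have hphase := half_sq_le_mul_cosh_div_sqrt_sub_one (zero_lt_one.trans_le hw) v
  have hv : |v / √w| ≤ |v| := by
    rw [abs_div, abs_of_nonneg (sqrt_nonneg w)]
    exact div_le_self (abs_nonneg v) (one_le_sqrt.2 hw)
  have hm : m * |v / √w| ≤ |m| * |v| :=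
    mul_le_mul (le_abs_self m) hv (abs_nonneg _) (abs_nonneg m)
  have hamgm : |m| * |v| ≤ m ^ 2 + v ^ 2 / 4 := by
    rw [← sq_abs m, ← sq_abs v]
    linarith [sq_nonneg (|m| - |v| / 2)]
  rw [← exp_add, ← exp_add]
  refine exp_le_exp.2 ?_
  linarith

lemma sqrt_mul_exp_mul_integral_exp_neg_mul_cosh_mul (w : ℝ) (F : ℝ → ℝ) :
    √w * exp w * ∫ u, exp (-(w * cosh u)) * F u
      = ∫ v, exp (-(w * (cosh (v / √w) - 1))) * F (v / √w) := by
  rw [Measure.integral_comp_div (fun u => exp (-(w * (cosh u - 1))) * F u), smul_eq_mul,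
    abs_of_nonneg (sqrt_nonneg w), mul_assoc, ← integral_const_mul]
  congr with u
  rw [← mul_assoc, ← exp_add]
  ring_nf

lemma integral_exp_neg_half_sq : ∫ v : ℝ, exp (-(v ^ 2 / 2)) = √(2 * π) := by
  have h := integral_gaussian (1 / 2)
  rw [div_div_eq_mul_div, div_one, mul_comm π] at h
  rw [← h]
  congr with v
  ring_nf

lemma two_mul_sqrt_pi_div_two_mul {w : ℝ} (hw : 0 ≤ w) :
    2 * √(π / (2 * w)) = √(2 * π) / √w := by
  rw [show π / (2 * w) = 2 * π / w / 2 ^ 2 by ring, sqrt_div (by positivity), sqrt_sq zero_le_two,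
    mul_div_cancel₀ _ two_ne_zero, sqrt_div (by positivity)]

variable [l.IsCountablyGenerated] {F : ι → ℝ → ℝ} {C m L : ℝ}

theorem tendsto_sqrt_mul_exp_mul_integral_exp_neg_mul_cosh_mul (hw : Tendsto w l atTop)
    (hF_meas : ∀ᶠ i in l, Measurable (F i))
    (hF_bound : ∀ᶠ i in l, ∀ u, |F i u| ≤ C * exp (m * |u|))
    (hF_lim : ∀ v, Tendsto (fun i => F i (v / √(w i))) l (𝓝 L)) :
    Tendsto (fun i => √(w i) * exp (w i) * ∫ u, exp (-(w i * cosh u)) * F i u) l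
      (𝓝 (√(2 * π) * L)) := by
  rw [← integral_exp_neg_half_sq, ← integral_mul_const]
  have hscaled : Tendsto
      (fun i => ∫ v, exp (-(w i * (cosh (v / √(w i)) - 1))) * F i (v / √(w i))) l
      (𝓝 (∫ v, exp (-(v ^ 2 / 2)) * L)) := by
    refine tendsto_integral_filter_of_dominated_convergence
      (fun v => C * (exp (m ^ 2) * exp (-(1 / 4) * v ^ 2))) ?_ ?_
      (((integrable_exp_neg_mul_sq (by norm_num)).const_mul _).const_mul _) ?_
    · filter_upwards [hF_meas] with i hi
      exact Measurable.aestronglyMeasurable (by fun_prop)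
    · filter_upwards [hF_bound, hw.eventually_ge_atTop 1] with i hi hwi
      refine Eventually.of_forall fun v => ?_
      have hC : 0 ≤ C := by simpa using (abs_nonneg (F i 0)).trans (hi 0)
      rw [norm_mul, norm_eq_abs, norm_eq_abs, abs_exp]
      calc exp (-(w i * (cosh (v / √(w i)) - 1))) * |F i (v / √(w i))|
          ≤ exp (-(w i * (cosh (v / √(w i)) - 1))) * (C * exp (m * |v / √(w i)|)) := by
            gcongr
            exact hi _
        _ = C * (exp (-(w i * (cosh (v / √(w i)) - 1))) * exp (m * |v / √(w i)|)) := by ring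
        _ ≤ C * (exp (m ^ 2) * exp (-(1 / 4) * v ^ 2)) := by
            gcongr C * ?_
            exact exp_neg_mul_cosh_div_sqrt_sub_one_mul_exp_le hwi m v
    · exact Eventually.of_forall fun v =>
        (tendsto_mul_cosh_div_sqrt_sub_one hw v).neg.rexp.mul (hF_lim v)
  exact hscaled.congr fun i => (sqrt_mul_exp_mul_integral_exp_neg_mul_cosh_mul (w i) (F i)).symm

theorem isEquivalent_integral_exp_neg_mul_cosh_mul (hw : Tendsto w l atTop)
    (hF_meas : ∀ᶠ i in l, Measurable (F i))
    (hF_bound : ∀ᶠ i in l, ∀ u, |F i u| ≤ C * exp (m * |u|))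
    (hF_lim : ∀ v, Tendsto (fun i => F i (v / √(w i))) l (𝓝 L)) (hL : L ≠ 0) :
    (fun i => ∫ u, exp (-(w i * cosh u)) * F i u)
      ~[l] fun i => 2 * L * (√(π / (2 * w i)) * exp (-w i)) := by
  refine isEquivalent_of_tendsto_one ?_
  have h := (tendsto_sqrt_mul_exp_mul_integral_exp_neg_mul_cosh_mul hw hF_meas hF_bound
    hF_lim).div_const (√(2 * π) * L)
  rw [div_self (mul_ne_zero (by positivity) hL)] at h
  refine h.congr' ?_
  filter_upwards [hw.eventually_gt_atTop 0] with i hi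
  rw [Pi.div_apply, mul_right_comm 2 L, ← mul_assoc 2, two_mul_sqrt_pi_div_two_mul hi.le, exp_neg]
  field_simp

end LaplaceMethod

theorem besselK_isEquivalent (μ : ℝ) :
    besselK μ ~[atTop] fun w => √(π / (2 * w)) * exp (-w) := by
  have hK (w : ℝ) : ∫ u, exp (-(w * cosh u)) * cosh (μ * u) = 2 * besselK μ w := by
    rw [besselK, ← integral_comp_abs (f := fun u => exp (-w * cosh u) * cosh (μ * u))]
    congr with u
    rw [neg_mul, cosh_abs, ← cosh_abs (μ * |u|), abs_mul, abs_abs, ← abs_mul, cosh_abs]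
  have h : (fun w => ∫ u, exp (-(w * cosh u)) * cosh (μ * u))
      ~[atTop] fun w => 2 * 1 * (√(π / (2 * w)) * exp (-w)) := by
    refine isEquivalent_integral_exp_neg_mul_cosh_mul (C := 1) (m := |μ|) tendsto_id
      (Eventually.of_forall fun _ => by fun_prop) (Eventually.of_forall fun _ u => ?_)
      (fun v => ?_) one_ne_zero
    · rw [abs_of_pos (cosh_pos _), one_mul, ← abs_mul]
      exact cosh_le_exp_abs (μ * u)
    · simpa [Function.comp_def] using
        (continuous_cosh.tendsto _).comp ((tendsto_div_sqrt_nhds_zero tendsto_id v).const_mul μ)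
  simpa [hK, Pi.mul_def] using (IsEquivalent.refl (u := fun _ : ℝ => (2 : ℝ)⁻¹)).mul h

theorem eventually_besselK_pos (μ : ℝ) : ∀ᶠ w in atTop, 0 < besselK μ w :=
  (besselK_isEquivalent μ).eventually_pos <| by
    filter_upwards [eventually_gt_atTop 0] with w hw
    positivity

lemma integral_Ioi_zero_eq_integral_exp_smul {E : Type*} [NormedAddCommGroup E] [NormedSpace ℝ E]
    (f : ℝ → E) : ∫ t in Ioi 0, f t = ∫ u, exp u • f (exp u) := by
  rw [← range_exp, ← image_univ, integral_image_eq_integral_abs_deriv_smul MeasurableSet.univ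
    (fun u _ => (hasDerivAt_exp u).hasDerivWithinAt) exp_injective.injOn, Measure.restrict_univ]
  simp only [abs_exp]

lemma integral_Ioi_zero_eq_integral_mul_exp_smul {E : Type*} [NormedAddCommGroup E]
    [NormedSpace ℝ E] (f : ℝ → E) {s : ℝ} (hs : 0 < s) :
    ∫ t in Ioi 0, f t = ∫ u, (s * exp u) • f (s * exp u) := by
  rw [integral_Ioi_zero_eq_integral_exp_smul,
    ← integral_add_right_eq_self (fun u => exp u • f (exp u)) (log s)]
  simp only [exp_add, exp_log hs, mul_comm s]

lemma mul_add_div_sqrt_div_mul_exp {p : ℝ} (hp : 0 ≤ p) (x u : ℝ) :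
    x * (√(p / x) * exp u) + p / (√(p / x) * exp u) = 2 * √(p * x) * cosh u := by
  have hxs : x * √(p / x) = √(p * x) := by
    rw [sqrt_div hp, sqrt_mul hp, mul_div_assoc', mul_comm x, mul_div_assoc, div_sqrt]
  have hps : p / √(p / x) = √(p * x) := by
    rw [sqrt_div hp, sqrt_mul hp, div_div_eq_mul_div, mul_div_right_comm, div_sqrt]
  rw [← mul_assoc, hxs, ← div_div, hps, cosh_eq, exp_neg]
  ring

lemma integral_rpow_mul_exp_neg_mul_add_div_mul {p x : ℝ} (hp : 0 < p) (hx : 0 < x) (μ : ℝ)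
    (g : ℝ → ℝ) :
    ∫ t in Ioi 0, t ^ (μ - 1) * exp (-(x * t + p / t)) * g t
      = (p / x) ^ (μ / 2) *
        ∫ u, exp (-(2 * √(p * x) * cosh u)) * (exp (μ * u) * g (√(p / x) * exp u)) := by
  have hs : 0 < √(p / x) := by positivity
  rw [integral_Ioi_zero_eq_integral_mul_exp_smul _ hs, ← integral_const_mul]
  congr with u
  have hpow : √(p / x) * exp u * (√(p / x) * exp u) ^ (μ - 1)
      = (p / x) ^ (μ / 2) * exp (μ * u) := by
    rw [mul_comm, ← rpow_add_one (by positivity), sub_add_cancel, mul_rpow hs.le (exp_nonneg u),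
      ← exp_mul, mul_comm u, sqrt_eq_rpow, ← rpow_mul (by positivity), one_div_mul_eq_div]
  rw [mul_add_div_sqrt_div_mul_exp hp.le, smul_eq_mul, ← mul_assoc, ← mul_assoc, hpow]
  ring

lemma tendsto_two_mul_sqrt_mul_atTop {p : ℝ} (hp : 0 < p) :
    Tendsto (fun x => 2 * √(p * x)) atTop atTop :=
  (tendsto_sqrt_atTop.comp (tendsto_id.const_mul_atTop hp)).const_mul_atTop two_pos

lemma tendsto_sqrt_div_mul_exp_nhdsGT_zero {p : ℝ} (hp : 0 < p) {u : ℝ → ℝ} {c : ℝ}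
    (hu : Tendsto u atTop (𝓝 c)) :
    Tendsto (fun x => √(p / x) * exp (u x)) atTop (𝓝[>] 0) := by
  refine tendsto_nhdsWithin_iff.2 ⟨?_, ?_⟩
  · simpa using (tendsto_id.const_div_atTop p).sqrt.mul hu.rexp
  · filter_upwards [eventually_gt_atTop 0] with x hx
    exact mul_pos (sqrt_pos.2 (div_pos hp hx)) (exp_pos _)

theorem isEquivalent_integral_rpow_mul_exp_neg_mul_add_div_mul {p : ℝ} (hp : 0 < p) (μ : ℝ)
    {g : ℝ → ℝ} {C L : ℝ} (hg_meas : Measurable g) (hg_bound : ∀ t > 0, |g t| ≤ C)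
    (hg_lim : Tendsto g (𝓝[>] 0) (𝓝 L)) (hL : L ≠ 0) :
    (fun x => ∫ t in Ioi 0, t ^ (μ - 1) * exp (-(x * t + p / t)) * g t)
      ~[atTop] fun x => 2 * L * (p / x) ^ (μ / 2) * besselK μ (2 * √(p * x)) := by
  have hw := tendsto_two_mul_sqrt_mul_atTop hp
  have hlaplace : (fun x => ∫ u, exp (-(2 * √(p * x) * cosh u)) *
        (exp (μ * u) * g (√(p / x) * exp u)))
      ~[atTop] fun x => 2 * L * (√(π / (2 * (2 * √(p * x)))) * exp (-(2 * √(p * x)))) := by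
    refine isEquivalent_integral_exp_neg_mul_cosh_mul (C := C) (m := |μ|) hw
      (Eventually.of_forall fun x => by fun_prop) ?_ (fun v => ?_) hL
    · filter_upwards [eventually_gt_atTop 0] with x hx u
      rw [abs_mul, abs_exp, mul_comm C, ← abs_mul]
      gcongr
      · exact le_abs_self (μ * u)
      · exact hg_bound _ (by positivity)
    · have hu := tendsto_div_sqrt_nhds_zero hw v
      simpa using (hu.const_mul μ).rexp.mul
        (hg_lim.comp (tendsto_sqrt_div_mul_exp_nhdsGT_zero hp hu))
  have hbessel : (fun x => 2 * L * besselK μ (2 * √(p * x)))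
      ~[atTop] fun x => 2 * L * (√(π / (2 * (2 * √(p * x)))) * exp (-(2 * √(p * x)))) :=
    IsEquivalent.refl.mul ((besselK_isEquivalent μ).comp_tendsto hw)
  refine ((IsEquivalent.refl (u := fun x => (p / x) ^ (μ / 2))).mul
    (hlaplace.trans hbessel.symm)).congr_left ?_ |>.congr_right ?_
  · filter_upwards [eventually_gt_atTop 0] with x hx
    exact (integral_rpow_mul_exp_neg_mul_add_div_mul hp hx μ g).symm
  · exact Eventually.of_forall fun x => by simp only [Pi.mul_apply]; ring

lemma two_mul_rpow_mul_sqrt_pi_div {p x : ℝ} (hp : 0 < p) (hx : 0 < x) (μ : ℝ) :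
    2 * (p / x) ^ (μ / 2) * √(π / (2 * (2 * √(p * x))))
      = √π * p ^ (μ / 2 - 1 / 4) * x ^ (-μ / 2 - 1 / 4) := by
  have hsqrt : √(π / (2 * (2 * √(p * x)))) = √π / (2 * (p ^ (1 / 4 : ℝ) * x ^ (1 / 4 : ℝ))) := by
    rw [← mul_assoc, ← sq, sqrt_div pi_nonneg, sqrt_mul (by positivity), sqrt_sq zero_le_two,
      sqrt_eq_rpow √_, sqrt_eq_rpow (p * x), ← rpow_mul (by positivity), mul_rpow hp.le hx.le]
    norm_num
  rw [hsqrt, div_rpow hp.le hx.le, rpow_sub hp, rpow_sub hx, neg_div, rpow_neg hx.le]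
  field_simp

/-- The integral `J(a,b;z) = ∫₀^1 t^a (1-t)^b e^{zt} exp(-p/(t(1-t))) dt` of the extended confluent
hypergeometric function. -/
noncomputable def extendedConfluentIntegral (p a b z : ℝ) : ℝ :=
  ∫ t in Ioo (0 : ℝ) 1, t ^ a * (1 - t) ^ b * exp (z * t) * exp (-p / (t * (1 - t)))

/-- The part of the integrand of `extendedConfluentIntegral` that is regular at `t = 0`, extended by
zero beyond `t = 1`. -/
noncomputable def endpointWeight (p b : ℝ) : ℝ → ℝ :=
  (Iio 1).indicator fun t => (1 - t) ^ b * exp (-(p / (1 - t)))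

lemma measurable_endpointWeight (p b : ℝ) : Measurable (endpointWeight p b) :=
  Measurable.indicator (by fun_prop) measurableSet_Iio

lemma rpow_mul_exp_neg_div_le {p b y : ℝ} {n : ℕ} (hp : 0 < p) (hn : -b ≤ n) (hy : 0 < y)
    (hy1 : y ≤ 1) : y ^ b * exp (-(p / y)) ≤ n.factorial / p ^ n := by
  have hpow : y ^ b ≤ (y ^ n)⁻¹ := by
    rw [← rpow_natCast, ← rpow_neg hy.le]
    exact rpow_le_rpow_of_exponent_ge hy hy1 (neg_le.1 hn)
  have hexp : exp (-(p / y)) ≤ ((p / y) ^ n / n.factorial)⁻¹ := by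
    rw [exp_neg]
    gcongr
    exact pow_div_factorial_le_exp (p / y) (by positivity) n
  calc y ^ b * exp (-(p / y)) ≤ (y ^ n)⁻¹ * ((p / y) ^ n / n.factorial)⁻¹ := by gcongr
    _ = n.factorial / p ^ n := by
      rw [div_pow]
      field_simp

lemma exists_abs_endpointWeight_le {p : ℝ} (hp : 0 < p) (b : ℝ) :
    ∃ C, ∀ t > 0, |endpointWeight p b t| ≤ C := by
  obtain ⟨n, hn⟩ := exists_nat_ge (-b)
  refine ⟨n.factorial / p ^ n, fun t ht => ?_⟩
  by_cases ht1 : t < 1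
  · have hy : 0 < 1 - t := sub_pos.2 ht1
    rw [endpointWeight, indicator_of_mem (mem_Iio.2 ht1), abs_of_nonneg (by positivity)]
    exact rpow_mul_exp_neg_div_le hp hn hy (by linarith)
  · rw [endpointWeight, indicator_of_notMem (by simpa using ht1), abs_zero]
    positivity

lemma tendsto_endpointWeight_nhds_zero (p b : ℝ) :
    Tendsto (endpointWeight p b) (𝓝 0) (𝓝 (exp (-p))) := by
  have hcont : ContinuousAt (fun t : ℝ => (1 - t) ^ b * exp (-(p / (1 - t)))) 0 := by
    fun_prop (disch := norm_num)
  have hlim := hcont.tendsto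
  simp only [sub_zero, one_rpow, div_one, one_mul] at hlim
  refine hlim.congr' ?_
  filter_upwards [Iio_mem_nhds one_pos] with t ht
  rw [endpointWeight, indicator_of_mem ht]

lemma extendedConfluentIntegral_neg_eq_integral_Ioi (p a b x : ℝ) :
    extendedConfluentIntegral p a b (-x)
      = ∫ t in Ioi 0, t ^ (a + 1 - 1) * exp (-(x * t + p / t)) * endpointWeight p b t := by
  simp_rw [endpointWeight,
    ← indicator_mul_right (Iio 1) (fun t : ℝ => t ^ (a + 1 - 1) * exp (-(x * t + p / t)))]
  rw [setIntegral_indicator measurableSet_Iio, Ioi_inter_Iio, extendedConfluentIntegral]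
  refine setIntegral_congr_fun measurableSet_Ioo fun t ⟨ht0, ht1⟩ => ?_
  have hsplit : -p / (t * (1 - t)) = -(p / t) + -(p / (1 - t)) := by
    have := (sub_pos.2 ht1).ne'
    field_simp
    ring
  simp only [hsplit, neg_add, exp_add, add_sub_cancel_right, neg_mul]
  ring

theorem extendedConfluentIntegral_neg_isEquivalent_besselK {p : ℝ} (hp : 0 < p) (a b : ℝ) :
    (fun x => extendedConfluentIntegral p a b (-x)) ~[atTop] fun x =>
      2 * exp (-p) * (p / x) ^ ((a + 1) / 2) * besselK (a + 1) (2 * √(p * x)) := by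
  obtain ⟨C, hC⟩ := exists_abs_endpointWeight_le hp b
  simp only [extendedConfluentIntegral_neg_eq_integral_Ioi]
  exact isEquivalent_integral_rpow_mul_exp_neg_mul_add_div_mul hp (a + 1)
    (measurable_endpointWeight p b) hC
    ((tendsto_endpointWeight_nhds_zero p b).mono_left nhdsWithin_le_nhds) (exp_ne_zero _)

theorem extendedConfluentIntegral_neg_isEquivalent_rpow_mul_exp {p : ℝ} (hp : 0 < p) (a b : ℝ) :
    (fun x => extendedConfluentIntegral p a b (-x)) ~[atTop] fun x =>
      √π * p ^ (a / 2 + 1 / 4) * x ^ (-a / 2 - 3 / 4) * exp (-p - 2 * √(p * x)) := by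
  refine (extendedConfluentIntegral_neg_isEquivalent_besselK hp a b).trans
    ((IsEquivalent.refl.mul ((besselK_isEquivalent (a + 1)).comp_tendsto
      (tendsto_two_mul_sqrt_mul_atTop hp))).congr_right ?_)
  filter_upwards [eventually_gt_atTop 0] with x hx
  have hp_exp : a / 2 + 1 / 4 = (a + 1) / 2 - 1 / 4 := by ring
  have hx_exp : -a / 2 - 3 / 4 = -(a + 1) / 2 - 1 / 4 := by ring
  rw [hp_exp, hx_exp, ← two_mul_rpow_mul_sqrt_pi_div hp hx, sub_eq_add_neg (-p), exp_add]
  simp only [Pi.mul_apply, Function.comp_apply]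
  ring

/-- Leading asymptotics, as `x → +∞`, of
`J(a,b;-x) = ∫₀^1 t^a (1-t)^b e^{-xt} exp(-p/(t(1-t))) dt`:
`J(a,b;-x) ~ √π p^{a/2+1/4} x^{-a/2-3/4} exp(-p - 2√(px))`, or equivalently
`J(a,b;-x) ~ 2 e^{-p} (p/x)^{(a+1)/2} K_{a+1}(2√(px))`. -/
theorem extended_confluent_asymptotics (p : ℝ) (hp : 0 < p) (a b : ℝ) :
    Tendsto (fun x : ℝ =>
      (∫ t in Ioo (0 : ℝ) 1, t ^ a * (1 - t) ^ b
          * Real.exp (-x * t) * Real.exp (-p / (t * (1 - t))))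
        / (Real.sqrt Real.pi * p ^ (a / 2 + 1/4) * x ^ (-a / 2 - 3/4)
            * Real.exp (-p - 2 * Real.sqrt (p * x))))
      atTop (nhds 1) ∧
    Tendsto (fun x : ℝ =>
      (∫ t in Ioo (0 : ℝ) 1, t ^ a * (1 - t) ^ b
          * Real.exp (-x * t) * Real.exp (-p / (t * (1 - t))))
        / (2 * Real.exp (-p) * (p / x) ^ ((a + 1) / 2)
            * besselK (a + 1) (2 * Real.sqrt (p * x))))
      atTop (nhds 1) := by
  constructor
  · refine (isEquivalent_iff_tendsto_one ?_).1
      (extendedConfluentIntegral_neg_isEquivalent_rpow_mul_exp hp a b)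
    filter_upwards [eventually_gt_atTop 0] with x hx
    positivity
  · refine (isEquivalent_iff_tendsto_one ?_).1
      (extendedConfluentIntegral_neg_isEquivalent_besselK hp a b)
    filter_upwards [eventually_gt_atTop 0,
      (tendsto_two_mul_sqrt_mul_atTop hp).eventually (eventually_besselK_pos (a + 1))] with x hx hK
    positivity
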